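/- Let q be a prime power with q ≡ 1 (mod 52) and let β be a primitive 13th root of unity in F_q. Then (q,26) gives a 3-design if and only if the sequence (χ(1−β), χ(1−β²), χ(1−β³), χ(1−β⁴), χ(1−β⁵), χ(1−β⁶)) is, up to a global sign, one of the following four sequences: (1,1,−1,1,−1,−1), (1,1,−1,−1,−1,1), (1,−1,1,1,−1,−1), (1,−1,1,−1,−1,1). Here χ is the quadratic residue character of F_q. -/

import Mathlib

/-!
Setting: `F` is a finite field of order `q`. The projective line `PG(1,q)` is
modelled as `Projectivization F (Fin 2 → F)`. Since scalar matrices act trivially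
on the projective line, the images of a set under all elements of `SL(2,F)` form
exactly its `PSL(2,F)`-orbit; `mapSL g` is the map of the projective line induced
by `g : SL(2,F)`. For `k ∣ q - 1`, the unique subgroup of order `k` of `Fˣ` is the
set of `k`-th roots of unity `{x : F | x ^ k = 1}`, embedded into the projective
line via `x ↦ [x : 1]`. `(q, k)` gives a 3-design iff there is `lam > 0` such that
every 3-subset of the projective line lies in exactly `lam` blocks of the orbit.
-/

noncomputable section

open Matrix

/-- The point at infinity `[1 : 0]` of the projective line over `F`. -/
def inftyPt (F : Type) [Field F] : Projectivization F (Fin 2 → F) :=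
  Projectivization.mk F ![1, 0] (by
    intro h
    simpa using congrFun h 0)

/-- The embedding of `F` into the projective line, `x ↦ [x : 1]`. -/
def embedPt (F : Type) [Field F] (x : F) : Projectivization F (Fin 2 → F) :=
  Projectivization.mk F ![x, 1] (by
    intro h
    simpa using congrFun h 1)

/-- The action of `g : SL(2,F)` on the projective line (as linear fractional
transformation). -/
def mapSL {F : Type} [Field F] (g : Matrix.SpecialLinearGroup (Fin 2) F) :
    Projectivization F (Fin 2 → F) → Projectivization F (Fin 2 → F) :=
  Projectivization.map (Matrix.SpecialLinearGroup.toLin' g : (Fin 2 → F) →ₗ[F] (Fin 2 → F))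
    (Matrix.SpecialLinearGroup.toLin' g).injective

/-- The starter block: the unique subgroup of order `k` of `Fˣ` (the `k`-th roots
of unity, for `k ∣ q - 1`), regarded as a subset of the projective line. -/
def starterB (F : Type) [Field F] (k : ℕ) : Set (Projectivization F (Fin 2 → F)) :=
  embedPt F '' {x : F | x ^ k = 1}

/-- The `PSL(2,F)`-orbit `GB` of the starter block. -/
def designBlocks (F : Type) [Field F] (k : ℕ) :
    Set (Set (Projectivization F (Fin 2 → F))) :=
  {S | ∃ g : Matrix.SpecialLinearGroup (Fin 2) F, S = mapSL g '' starterB F k}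

/-- `GB` is the block set of a `3-(q+1, k, lam)` design: `lam` is positive and every
3-subset of the projective line is contained in exactly `lam` blocks. -/
def isThreeDesign (F : Type) [Field F] (k lam : ℕ) : Prop :=
  0 < lam ∧
    ∀ T : Finset (Projectivization F (Fin 2 → F)), T.card = 3 →
      {S ∈ designBlocks F k | (T : Set (Projectivization F (Fin 2 → F))) ⊆ S}.ncard = lam

/-- `(q, k)` gives a 3-design. -/
def gives3Design (F : Type) [Field F] (k : ℕ) : Prop :=
  ∃ lam : ℕ, isThreeDesign F k lam

/-- The sequence `(χ(1-β), χ(1-β²), …, χ(1-β⁶))` is, up to a global sign `ε`, one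
of the four sequences `(1,1,-1,1,-1,-1)`, `(1,1,-1,-1,-1,1)`, `(1,-1,1,1,-1,-1)`,
`(1,-1,1,-1,-1,1)`. -/
def goodChiSequence (F : Type) [Field F] [Fintype F] [DecidableEq F] (β : F) : Prop :=
  ∃ ε : ℤ, (ε = 1 ∨ ε = -1) ∧
    ((quadraticChar F (1 - β), quadraticChar F (1 - β ^ 2), quadraticChar F (1 - β ^ 3),
        quadraticChar F (1 - β ^ 4), quadraticChar F (1 - β ^ 5), quadraticChar F (1 - β ^ 6)) =
          (ε, ε, -ε, ε, -ε, -ε) ∨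
      (quadraticChar F (1 - β), quadraticChar F (1 - β ^ 2), quadraticChar F (1 - β ^ 3),
        quadraticChar F (1 - β ^ 4), quadraticChar F (1 - β ^ 5), quadraticChar F (1 - β ^ 6)) =
          (ε, ε, -ε, -ε, -ε, ε) ∨
      (quadraticChar F (1 - β), quadraticChar F (1 - β ^ 2), quadraticChar F (1 - β ^ 3),
        quadraticChar F (1 - β ^ 4), quadraticChar F (1 - β ^ 5), quadraticChar F (1 - β ^ 6)) =
          (ε, -ε, ε, ε, -ε, -ε) ∨
      (quadraticChar F (1 - β), quadraticChar F (1 - β ^ 2), quadraticChar F (1 - β ^ 3),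
        quadraticChar F (1 - β ^ 4), quadraticChar F (1 - β ^ 5), quadraticChar F (1 - β ^ 6)) =
          (ε, -ε, ε, -ε, -ε, ε))

open Matrix

abbrev PL (F : Type) [Field F] := Projectivization F (Fin 2 → F)

def d2 {F : Type} [Field F] (u v : Fin 2 → F) : F := u 0 * v 1 - u 1 * v 0

def sg {F : Type} [Field F] [Fintype F] [DecidableEq F] (p q r : PL F) : ℤ :=
  quadraticChar F (d2 p.rep q.rep * d2 q.rep r.rep * d2 r.rep p.rep)

section A
variable {F : Type} [Field F]

lemma d2_smul (a b : F) (u v : Fin 2 → F) : d2 (a • u) (b • v) = a * b * d2 u v := by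
  simp [d2]; ring

lemma chi_sq_mul [Fintype F] [DecidableEq F] (a b : F) (ha : a ≠ 0) :
    quadraticChar F (a ^ 2 * b) = quadraticChar F b := by
  rw [map_mul, quadraticChar_sq_one' ha, one_mul]

lemma sg_mk [Fintype F] [DecidableEq F] (u v w : Fin 2 → F) (hu : u ≠ 0) (hv : v ≠ 0)
    (hw : w ≠ 0) :
    sg (Projectivization.mk F u hu) (Projectivization.mk F v hv) (Projectivization.mk F w hw) =
      quadraticChar F (d2 u v * d2 v w * d2 w u) := by
  obtain ⟨a, ha⟩ := Projectivization.exists_smul_eq_mk_rep F u hu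
  obtain ⟨b, hb⟩ := Projectivization.exists_smul_eq_mk_rep F v hv
  obtain ⟨c, hc⟩ := Projectivization.exists_smul_eq_mk_rep F w hw
  unfold sg
  rw [← ha, ← hb, ← hc]
  simp only [Units.smul_def, d2_smul]
  rw [← chi_sq_mul ((a : F) * b * c) (d2 u v * d2 v w * d2 w u) (by simp)]
  congr 1; ring

lemma d2_eq_zero {u v : Fin 2 → F} (hu : u ≠ 0) (hv : v ≠ 0) (h : d2 u v = 0) :
    Projectivization.mk F u hu = Projectivization.mk F v hv := by
  rw [Projectivization.mk_eq_mk_iff']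
  unfold d2 at h
  by_cases h0 : v 0 = 0
  · have h1 : v 1 ≠ 0 := by
      intro h1; apply hv; ext i; fin_cases i <;> simp [h0, h1]
    refine ⟨u 1 / v 1, ?_⟩
    have : u 0 = 0 := by
      rw [h0] at h; simpa [h1] using h
    ext i; fin_cases i <;> simp [h0, h1, this]
  · refine ⟨u 0 / v 0, ?_⟩
    ext i; fin_cases i
    · simp [h0]
    · simp; field_simp; linear_combination h

lemma sg_ne_zero_iff [Fintype F] [DecidableEq F] (p q r : PL F) :
    sg p q r ≠ 0 ↔ p ≠ q ∧ p ≠ r ∧ q ≠ r := by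
  induction p using Projectivization.ind with | _ u hu
  induction q using Projectivization.ind with | _ v hv
  induction r using Projectivization.ind with | _ w hw
  constructor
  · intro h
    refine ⟨?_, ?_, ?_⟩
    all_goals
      intro e
      apply h
      rw [e]
      unfold sg
      simp [d2, mul_comm]
  · rintro ⟨h1, h2, h3⟩
    rw [sg_mk]
    intro h
    rw [quadraticChar_eq_zero_iff] at h
    rcases mul_eq_zero.1 h with h | h
    · rcases mul_eq_zero.1 h with h | h
      · exact h1 (d2_eq_zero hu hv h)
      · exact h3 (d2_eq_zero hv hw h)
    · exact h2 (d2_eq_zero hw hu h).symm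

lemma sg_map [Fintype F] [DecidableEq F] (f : (Fin 2 → F) →ₗ[F] (Fin 2 → F))
    (hf : Function.Injective f) (D : F) (hD : ∀ u v, d2 (f u) (f v) = D * d2 u v)
    (hD0 : D ≠ 0) (p q r : PL F) :
    sg (Projectivization.map f hf p) (Projectivization.map f hf q) (Projectivization.map f hf r)
      = quadraticChar F D * sg p q r := by
  induction p using Projectivization.ind with | _ u hu
  induction q using Projectivization.ind with | _ v hv
  induction r using Projectivization.ind with | _ w hw
  simp only [Projectivization.map_mk]
  rw [sg_mk, sg_mk, ← map_mul, hD, hD, hD,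
    ← chi_sq_mul D (D * (d2 u v * d2 v w * d2 w u)) hD0]
  congr 1; ring

lemma d2_SL (g : Matrix.SpecialLinearGroup (Fin 2) F) (u v : Fin 2 → F) :
    d2 (Matrix.SpecialLinearGroup.toLin' g u) (Matrix.SpecialLinearGroup.toLin' g v) = d2 u v := by
  have h := g.2
  rw [Matrix.det_fin_two] at h
  simp only [Matrix.SpecialLinearGroup.toLin'_apply, d2, Matrix.toLin'_apply, Matrix.mulVec,
    dotProduct, Fin.sum_univ_two]
  linear_combination (u 0 * v 1 - u 1 * v 0) * h

lemma toLin_SL (g : Matrix.SpecialLinearGroup (Fin 2) F) (u : Fin 2 → F) (i : Fin 2) :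
    Matrix.SpecialLinearGroup.toLin' g u i = g.1 i 0 * u 0 + g.1 i 1 * u 1 := by
  simp only [Matrix.SpecialLinearGroup.toLin'_apply, Matrix.toLin'_apply, Matrix.mulVec,
    dotProduct, Fin.sum_univ_two]

lemma sg_mapSL [Fintype F] [DecidableEq F] (g : Matrix.SpecialLinearGroup (Fin 2) F)
    (p q r : PL F) : sg (mapSL g p) (mapSL g q) (mapSL g r) = sg p q r := by
  unfold mapSL
  rw [sg_map _ _ 1 (fun u v => by rw [one_mul]; exact d2_SL g u v) one_ne_zero]
  simp

lemma mapSL_mul (g h : Matrix.SpecialLinearGroup (Fin 2) F) (p : PL F) :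
    mapSL (g * h) p = mapSL g (mapSL h p) := by
  induction p using Projectivization.ind with | _ u hu
  simp only [mapSL, Projectivization.map_mk]
  congr 1
  simp

lemma mapSL_one (p : PL F) : mapSL (1 : Matrix.SpecialLinearGroup (Fin 2) F) p = p := by
  induction p using Projectivization.ind with | _ u hu
  simp only [mapSL, Projectivization.map_mk]
  congr 1
  simp

lemma mapSL_inj (g : Matrix.SpecialLinearGroup (Fin 2) F) : Function.Injective (mapSL g) := by
  intro p q h
  have := congrArg (mapSL g⁻¹) h
  simpa [← mapSL_mul, mapSL_one] using this

lemma mapSL_bij (g : Matrix.SpecialLinearGroup (Fin 2) F) : Function.Bijective (mapSL g) := by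
  refine ⟨mapSL_inj g, fun p => ⟨mapSL g⁻¹ p, ?_⟩⟩
  rw [← mapSL_mul]; simp [mapSL_one]

lemma mapSL_trans [Fintype F] [DecidableEq F] (d : F) (hd : d ≠ 0) (p q r : PL F)
    (h : sg p q r = quadraticChar F d) :
    ∃ g : Matrix.SpecialLinearGroup (Fin 2) F,
      mapSL g (inftyPt F) = p ∧ mapSL g (embedPt F 0) = q ∧ mapSL g (embedPt F d) = r := by
  induction p using Projectivization.ind with | _ u hu
  induction q using Projectivization.ind with | _ v hv
  induction r using Projectivization.ind with | _ w hw
  rw [sg_mk] at h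
  have hd' : quadraticChar F d ≠ 0 := by
    rwa [Ne, quadraticChar_eq_zero_iff]
  have hne : d2 u v * d2 v w * d2 w u ≠ 0 := by
    rw [← h, Ne, quadraticChar_eq_zero_iff] at hd'; exact hd'
  have hsq : IsSquare (d * (d2 u v * d2 v w * d2 w u)) := by
    rw [← quadraticChar_one_iff_isSquare (mul_ne_zero hd hne), map_mul, h, ← sq,
      quadraticChar_sq_one hd]
  obtain ⟨s, hs⟩ := hsq
  have hs0 : s ≠ 0 := by
    rintro rfl; exact mul_ne_zero hd hne (by simpa using hs)
  have hD : d2 u v ≠ 0 := fun h => hne (by simp [h])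
  have hA : d2 w v ≠ 0 := fun h => hne (by
    have : d2 v w = 0 := by
      unfold d2 at *; linear_combination -h
    simp [this])
  have hC : d2 u w ≠ 0 := fun h => hne (by
    have : d2 w u = 0 := by
      unfold d2 at *; linear_combination -h
    simp [this])
  refine ⟨⟨!![d2 w v / s * u 0, d * d2 u w / s * v 0; d2 w v / s * u 1, d * d2 u w / s * v 1], ?_⟩,
    ?_, ?_, ?_⟩
  · rw [Matrix.det_fin_two_of]
    field_simp
    unfold d2 at *
    linear_combination hs
  · simp only [mapSL, inftyPt, Projectivization.map_mk]
    rw [Projectivization.mk_eq_mk_iff']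
    refine ⟨d2 w v / s, ?_⟩
    ext i; refine Eq.trans ?_ (toLin_SL _ _ i).symm; fin_cases i <;> simp
  · simp only [mapSL, embedPt, Projectivization.map_mk]
    rw [Projectivization.mk_eq_mk_iff']
    refine ⟨d * d2 u w / s, ?_⟩
    ext i; refine Eq.trans ?_ (toLin_SL _ _ i).symm; fin_cases i <;> simp
  · simp only [mapSL, embedPt, Projectivization.map_mk]
    rw [Projectivization.mk_eq_mk_iff']
    refine ⟨d * d2 u v / s, ?_⟩
    ext i; refine Eq.trans ?_ (toLin_SL _ _ i).symm; fin_cases i <;> simp <;> field_simp <;>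
      unfold d2 <;> ring

def Nb (k : ℕ) (p q r : PL F) : ℕ :=
  {S ∈ designBlocks F k | p ∈ S ∧ q ∈ S ∧ r ∈ S}.ncard

lemma Nb_mapSL (k : ℕ) (g : Matrix.SpecialLinearGroup (Fin 2) F) (p q r : PL F) :
    Nb k (mapSL g p) (mapSL g q) (mapSL g r) = Nb k p q r := by
  unfold Nb
  rw [← Set.ncard_image_of_injective {S ∈ designBlocks F k | p ∈ S ∧ q ∈ S ∧ r ∈ S}
    (mapSL_inj g).image_injective]
  congr 1
  ext S
  constructor
  · rintro ⟨⟨h, rfl⟩, hp, hq, hr⟩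
    have e : mapSL g '' (mapSL (g⁻¹ * h) '' starterB F k) = mapSL h '' starterB F k := by
      rw [Set.image_image]
      congr 1; ext x; rw [← mapSL_mul]; simp
    refine ⟨mapSL (g⁻¹ * h) '' starterB F k, ⟨⟨_, rfl⟩, ?_⟩, e⟩
    rw [← e] at hp hq hr
    rw [(mapSL_inj g).mem_set_image] at hp hq hr
    exact ⟨hp, hq, hr⟩
  · rintro ⟨S', ⟨⟨h, rfl⟩, hp, hq, hr⟩, rfl⟩
    refine ⟨⟨g * h, ?_⟩, Set.mem_image_of_mem _ hp, Set.mem_image_of_mem _ hq,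
      Set.mem_image_of_mem _ hr⟩
    rw [Set.image_image]
    congr 1; ext x; rw [← mapSL_mul]

open scoped Classical in
def ind (S : Set (PL F)) (p : PL F) : ℤ := if p ∈ S then 1 else 0

def T0 [Fintype F] [DecidableEq F] [Fintype (PL F)] (S : Set (PL F)) : ℤ :=
  ∑ p, ∑ q, ∑ r, ind S p * (ind S q * (ind S r * sg p q r))

lemma sum3_bij [Fintype (PL F)] (f : PL F → PL F) (hf : Function.Bijective f)
    (H : PL F → PL F → PL F → ℤ) :
    ∑ p, ∑ q, ∑ r, H (f p) (f q) (f r) = ∑ p, ∑ q, ∑ r, H p q r := by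
  rw [← hf.sum_comp (fun p => ∑ q, ∑ r, H p q r)]
  refine Finset.sum_congr rfl fun p _ => ?_
  rw [← hf.sum_comp (fun q => ∑ r, H (f p) q r)]
  refine Finset.sum_congr rfl fun q _ => ?_
  rw [← hf.sum_comp (fun r => H (f p) (f q) r)]

lemma T0_map [Fintype F] [DecidableEq F] [Fintype (PL F)]
    (g : Matrix.SpecialLinearGroup (Fin 2) F) (S : Set (PL F)) :
    T0 (mapSL g '' S) = T0 S := by
  unfold T0
  rw [← sum3_bij (mapSL g) (mapSL_bij g)]
  simp only [sg_mapSL]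
  have : ∀ p, ind (mapSL g '' S) (mapSL g p) = ind S p := by
    intro p; unfold ind; rw [(mapSL_inj g).mem_set_image]
  simp only [this]

lemma sum_sg_Nb [Fintype F] [DecidableEq F] [Fintype (PL F)] (k : ℕ) :
    ∑ p : PL F, ∑ q, ∑ r, sg p q r * (Nb k p q r : ℤ)
      = ((designBlocks F k).ncard : ℤ) * T0 (starterB F k) := by
  classical
  have hfin : (designBlocks F k).Finite := Set.toFinite _
  have h1 : ∀ p q r : PL F, (Nb k p q r : ℤ) =
      ∑ S ∈ hfin.toFinset, ind S p * (ind S q * ind S r) := by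
    intro p q r
    have : {S ∈ designBlocks F k | p ∈ S ∧ q ∈ S ∧ r ∈ S} =
      ((hfin.toFinset.filter fun S => p ∈ S ∧ q ∈ S ∧ r ∈ S : Finset _) : Set (Set (PL F))) := by
      ext S; simp
    unfold Nb
    rw [this, Set.ncard_coe_finset, Finset.card_filter, Nat.cast_sum]
    refine Finset.sum_congr rfl fun S _ => ?_
    unfold ind
    by_cases hp : p ∈ S <;> by_cases hq : q ∈ S <;> by_cases hr : r ∈ S <;> simp [hp, hq, hr]
  have h2 : ∀ S ∈ hfin.toFinset, T0 S = T0 (starterB F k) := by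
    intro S hS
    obtain ⟨g, rfl⟩ := hfin.mem_toFinset.1 hS
    exact T0_map g _
  rw [Set.ncard_eq_toFinset_card _ hfin, ← nsmul_eq_mul, ← Finset.sum_const,
    ← Finset.sum_congr rfl h2]
  unfold T0
  simp only [h1, Finset.mul_sum]
  rw [Finset.sum_comm (s := hfin.toFinset)]
  refine Finset.sum_congr rfl fun p _ => ?_
  rw [Finset.sum_comm (s := hfin.toFinset)]
  refine Finset.sum_congr rfl fun q _ => ?_
  rw [Finset.sum_comm (s := hfin.toFinset)]
  refine Finset.sum_congr rfl fun r _ => ?_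
  refine Finset.sum_congr rfl fun S _ => ?_
  ring

lemma sum_sg [Fintype F] [DecidableEq F] [Fintype (PL F)] (h2 : ringChar F ≠ 2) :
    ∑ p : PL F, ∑ q, ∑ r, sg p q r = 0 := by
  obtain ⟨d, hd⟩ := quadraticChar_exists_neg_one h2
  have hd0 : d ≠ 0 := by rintro rfl; simp at hd
  let f : (Fin 2 → F) →ₗ[F] (Fin 2 → F) := Matrix.toLin' !![d, 0; 0, 1]
  have hfa : ∀ u, f u = ![d * u 0, u 1] := by
    intro u; ext i; fin_cases i <;> simp [f, Matrix.mulVec, dotProduct, Fin.sum_univ_two]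
  have hf : Function.Injective f := by
    intro u v h
    have h0 := congrFun h 0
    have h1 := congrFun h 1
    rw [hfa, hfa] at h0 h1
    simp [hd0] at h0 h1
    ext i; fin_cases i <;> simp [h0, h1]
  have hD : ∀ u v, d2 (f u) (f v) = d * d2 u v := by
    intro u v; rw [hfa, hfa]; simp [d2]; ring
  have hb : Function.Bijective (Projectivization.map f hf) :=
    Finite.injective_iff_bijective.1 (Projectivization.map_injective f hf)
  have := sum3_bij _ hb sg
  simp only [sg_map f hf d hD hd0, hd, neg_one_mul, Finset.sum_neg_distrib] at this
  linarith

lemma design_iff [Fintype F] [DecidableEq F] [Fintype (PL F)] (h2 : ringChar F ≠ 2)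
    (k : ℕ) (a b c : F) (ha : a ^ k = 1) (hb : b ^ k = 1) (hc : c ^ k = 1)
    (hab : a ≠ b) (hac : a ≠ c) (hbc : b ≠ c) :
    gives3Design F k ↔ T0 (starterB F k) = 0 := by
  classical
  have hBD : starterB F k ∈ designBlocks F k := by
    refine ⟨1, ?_⟩
    ext x; simp [mapSL_one]
  have hD0 : ((designBlocks F k).ncard : ℤ) ≠ 0 := by
    have : (designBlocks F k).Nonempty := ⟨_, hBD⟩
    have := (Set.ncard_pos (Set.toFinite (designBlocks F k))).2 this
    omega
  have hset : ∀ p q r : PL F, {S ∈ designBlocks F k |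
      ((({p, q, r} : Finset (PL F)) : Set (PL F))) ⊆ S}.ncard = Nb k p q r := by
    intro p q r
    unfold Nb
    congr 1; ext S; simp [Set.insert_subset_iff]
  have key : ∀ lam : ℕ, isThreeDesign F k lam ↔ 0 < lam ∧ ∀ p q r : PL F, sg p q r ≠ 0 →
      Nb k p q r = lam := by
    intro lam
    unfold isThreeDesign
    refine and_congr_right fun _ => ⟨fun h p q r hs => ?_, fun h T hT => ?_⟩
    · rw [← hset]
      apply h
      rw [Finset.card_eq_three]
      obtain ⟨h1, h2, h3⟩ := (sg_ne_zero_iff p q r).1 hs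
      exact ⟨p, q, r, h1, h2, h3, rfl⟩
    · obtain ⟨p, q, r, h1, h2, h3, rfl⟩ := Finset.card_eq_three.1 hT
      rw [← h p q r ((sg_ne_zero_iff p q r).2 ⟨h1, h2, h3⟩)]
      exact hset p q r
  have hW := sum_sg_Nb (F := F) k
  have hZ := sum_sg (F := F) h2
  constructor
  · rintro ⟨lam, hl⟩
    rw [key] at hl
    have : ∀ p q r : PL F, sg p q r * (Nb k p q r : ℤ) = lam * sg p q r := by
      intro p q r
      by_cases h : sg p q r = 0
      · simp [h]
      · rw [hl.2 p q r h, mul_comm]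
    simp only [this, ← Finset.mul_sum, hZ] at hW
    rw [mul_zero] at hW
    exact (mul_eq_zero.1 hW.symm).resolve_left hD0
  · intro h
    obtain ⟨d, hd⟩ := quadraticChar_exists_neg_one h2
    have hd0 : d ≠ 0 := by rintro rfl; simp at hd
    have hN1 : ∀ p q r : PL F, sg p q r = 1 →
        Nb k p q r = Nb k (inftyPt F) (embedPt F 0) (embedPt F 1) := by
      intro p q r hs
      obtain ⟨g, rfl, rfl, rfl⟩ := mapSL_trans 1 one_ne_zero p q r (by simpa using hs)
      exact Nb_mapSL ..
    have hN2 : ∀ p q r : PL F, sg p q r = -1 →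
        Nb k p q r = Nb k (inftyPt F) (embedPt F 0) (embedPt F d) := by
      intro p q r hs
      obtain ⟨g, rfl, rfl, rfl⟩ := mapSL_trans d hd0 p q r (by rw [hs, hd])
      exact Nb_mapSL ..
    set N1 := Nb k (inftyPt F) (embedPt F 0) (embedPt F 1)
    set N2 := Nb k (inftyPt F) (embedPt F 0) (embedPt F d)
    have htri : ∀ p q r : PL F, sg p q r = 0 ∨ sg p q r = 1 ∨ sg p q r = -1 := by
      intro p q r
      by_cases h : d2 p.rep q.rep * d2 q.rep r.rep * d2 r.rep p.rep = 0
      · left; unfold sg; rw [h]; simp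
      · right; exact quadraticChar_dichotomy h
    have hB : sg (embedPt F a) (embedPt F b) (embedPt F c) ≠ 0 := by
      unfold embedPt
      rw [sg_mk, Ne, quadraticChar_eq_zero_iff]
      simp [d2, sub_eq_zero, hab, hbc, hac.symm]
    have hsum : 2 * ∑ p : PL F, ∑ q, ∑ r, sg p q r * (Nb k p q r : ℤ) =
        ((N1 : ℤ) + N2) * ∑ p : PL F, ∑ q, ∑ r, sg p q r +
        ((N1 : ℤ) - N2) * ∑ p : PL F, ∑ q, ∑ r, sg p q r ^ 2 := by
      simp only [Finset.mul_sum, ← Finset.sum_add_distrib]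
      refine Finset.sum_congr rfl fun p _ => Finset.sum_congr rfl fun q _ =>
        Finset.sum_congr rfl fun r _ => ?_
      rcases htri p q r with e | e | e
      · simp [e]
      · rw [hN1 p q r e, e]; ring
      · rw [hN2 p q r e, e]; ring
    have hpos : 0 < ∑ p : PL F, ∑ q, ∑ r, sg p q r ^ 2 := by
      have hnn : ∀ p q r : PL F, 0 ≤ sg p q r ^ 2 := fun p q r => sq_nonneg _
      calc (0 : ℤ) < sg (embedPt F a) (embedPt F b) (embedPt F c) ^ 2 := by positivity
        _ ≤ ∑ r, sg (embedPt F a) (embedPt F b) r ^ 2 :=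
          Finset.single_le_sum (f := fun r => sg (embedPt F a) (embedPt F b) r ^ 2)
            (fun r _ => hnn _ _ r) (Finset.mem_univ _)
        _ ≤ ∑ q, ∑ r, sg (embedPt F a) q r ^ 2 :=
          Finset.single_le_sum (f := fun q => ∑ r, sg (embedPt F a) q r ^ 2)
            (fun q _ => Finset.sum_nonneg fun r _ => hnn _ q r) (Finset.mem_univ _)
        _ ≤ _ :=
          Finset.single_le_sum (f := fun p => ∑ q, ∑ r, sg p q r ^ 2)
            (fun p _ => Finset.sum_nonneg fun q _ => Finset.sum_nonneg fun r _ => hnn p q r)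
            (Finset.mem_univ _)
    rw [hW, hZ, h] at hsum
    have hN : N1 = N2 := by
      have : ((N1 : ℤ) - N2) * ∑ p : PL F, ∑ q, ∑ r, sg p q r ^ 2 = 0 := by linarith
      have := (mul_eq_zero.1 this).resolve_right hpos.ne'
      omega
    have hall : ∀ p q r : PL F, sg p q r ≠ 0 → Nb k p q r = N1 := by
      intro p q r hs
      rcases htri p q r with e | e | e
      · exact absurd e hs
      · exact hN1 p q r e
      · rw [hN]; exact hN2 p q r e
    refine ⟨N1, (key N1).2 ⟨?_, hall⟩⟩
    rw [← hall _ _ _ hB]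
    unfold Nb
    rw [Set.ncard_pos (Set.toFinite _)]
    exact ⟨starterB F k, hBD, ⟨a, ha, rfl⟩, ⟨b, hb, rfl⟩, ⟨c, hc, rfl⟩⟩

end A
def Rp (y1 y2 y3 y4 y5 y6 y7 y8 y9 y10 y11 y12 y13 : ℤ) : ℤ :=
  1*(y1*y1*y2) + 2*(y1*y2*y3) + 2*(y1*y3*y4) + 2*(y1*y4*y5) + 2*(y1*y5*y6) + 2*(y1*y6*y7) +
    2*(y1*y7*y8) + 2*(y1*y8*y9) + 2*(y1*y9*y10) + 2*(y1*y10*y11) + 2*(y1*y11*y12) + 2*(y1*y12*y13)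
    + 1*(y2*y2*y4) + 2*(y2*y3*y5) + 2*(y2*y4*y6) + 2*(y2*y5*y7) + 2*(y2*y6*y8) + 2*(y2*y7*y9) +
    2*(y2*y8*y10) + 2*(y2*y9*y11) + 2*(y2*y10*y12) + 2*(y2*y11*y13) + 1*(y2*y12*y12) + 1*(y3*y3*y6)
    + 2*(y3*y4*y7) + 2*(y3*y5*y8) + 2*(y3*y6*y9) + 2*(y3*y7*y10) + 2*(y3*y8*y11) + 2*(y3*y9*y12) +
    2*(y3*y10*y13) + 2*(y3*y11*y12) + 1*(y4*y4*y8) + 2*(y4*y5*y9) + 2*(y4*y6*y10) + 2*(y4*y7*y11) +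
    2*(y4*y8*y12) + 2*(y4*y9*y13) + 2*(y4*y10*y12) + 1*(y4*y11*y11) + 1*(y5*y5*y10) + 2*(y5*y6*y11)
    + 2*(y5*y7*y12) + 2*(y5*y8*y13) + 2*(y5*y9*y12) + 2*(y5*y10*y11) + 1*(y6*y6*y12) +
    2*(y6*y7*y13) + 2*(y6*y8*y12) + 2*(y6*y9*y11) + 1*(y6*y10*y10) + 1*(y7*y7*y12) + 2*(y7*y8*y11)
    + 2*(y7*y9*y10) + 1*(y8*y8*y10) + 1*(y8*y9*y9)

lemma sum_Rp (z : ℕ → ℤ) (h0 : z 0 = 0) (hper : ∀ n, z (n + 26) = z n)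
    (hev : ∀ n ≤ 26, z (26 - n) = z n) :
    ∑ a ∈ Finset.range 26, ∑ b ∈ Finset.range 26, z a * z b * z (a + b) =
      6 * Rp (z 1) (z 2) (z 3) (z 4) (z 5) (z 6) (z 7) (z 8) (z 9) (z 10) (z 11) (z 12) (z 13) := by
  have e14 : z 14 = z 12 := hev 12 (by norm_num)
  have e15 : z 15 = z 11 := hev 11 (by norm_num)
  have e16 : z 16 = z 10 := hev 10 (by norm_num)
  have e17 : z 17 = z 9 := hev 9 (by norm_num)
  have e18 : z 18 = z 8 := hev 8 (by norm_num)
  have e19 : z 19 = z 7 := hev 7 (by norm_num)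
  have e20 : z 20 = z 6 := hev 6 (by norm_num)
  have e21 : z 21 = z 5 := hev 5 (by norm_num)
  have e22 : z 22 = z 4 := hev 4 (by norm_num)
  have e23 : z 23 = z 3 := hev 3 (by norm_num)
  have e24 : z 24 = z 2 := hev 2 (by norm_num)
  have e25 : z 25 = z 1 := hev 1 (by norm_num)
  have e26 : z 26 = 0 := (hper 0).trans h0
  have e27 : z 27 = z 1 := (hper 1)
  have e28 : z 28 = z 2 := (hper 2)
  have e29 : z 29 = z 3 := (hper 3)
  have e30 : z 30 = z 4 := (hper 4)
  have e31 : z 31 = z 5 := (hper 5)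
  have e32 : z 32 = z 6 := (hper 6)
  have e33 : z 33 = z 7 := (hper 7)
  have e34 : z 34 = z 8 := (hper 8)
  have e35 : z 35 = z 9 := (hper 9)
  have e36 : z 36 = z 10 := (hper 10)
  have e37 : z 37 = z 11 := (hper 11)
  have e38 : z 38 = z 12 := (hper 12)
  have e39 : z 39 = z 13 := (hper 13)
  have e40 : z 40 = z 12 := (hper 14).trans e14
  have e41 : z 41 = z 11 := (hper 15).trans e15
  have e42 : z 42 = z 10 := (hper 16).trans e16
  have e43 : z 43 = z 9 := (hper 17).trans e17
  have e44 : z 44 = z 8 := (hper 18).trans e18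
  have e45 : z 45 = z 7 := (hper 19).trans e19
  have e46 : z 46 = z 6 := (hper 20).trans e20
  have e47 : z 47 = z 5 := (hper 21).trans e21
  have e48 : z 48 = z 4 := (hper 22).trans e22
  have e49 : z 49 = z 3 := (hper 23).trans e23
  have e50 : z 50 = z 2 := (hper 24).trans e24
  simp only [Finset.sum_range_succ, Finset.sum_range_zero, Nat.reduceAdd, zero_add, add_zero, h0,
    mul_zero, zero_mul, e14, e15, e16, e17, e18, e19, e20, e21, e22, e23, e24, e25, e26, e27, e28, e29, e30, e31, e32,
    e33, e34, e35, e36, e37, e38, e39, e40, e41, e42, e43, e44, e45, e46, e47, e48, e49, e50]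
  unfold Rp
  ring

def sb (b : Bool) : ℤ := bif b then 1 else -1

lemma Rp_dec : ∀ b1 b2 b3 b4 b5 b6 d : Bool,
    let x1 := sb b1
    let x2 := sb b2
    let x3 := sb b3
    let x4 := sb b4
    let x5 := sb b5
    let x6 := sb b6
    let c := sb d
    Rp (x2*x1) x2 (x6*x3) x4 (x3*x5) x6 (x1*x6) x5 (x5*x4) x3 (x4*x2) x1 c = 0 ↔
    (b1 ≠ b5 ∧ b2 ≠ b3 ∧ b4 ≠ b6) := by
  decide +kernel

section C
variable {F : Type} [Field F]

lemma embedPt_inj : Function.Injective (embedPt F) := by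
  intro x y h
  unfold embedPt at h
  rw [Projectivization.mk_eq_mk_iff'] at h
  obtain ⟨a, ha⟩ := h
  have h0 := congrFun ha 0
  have h1 := congrFun ha 1
  simp at h0 h1
  rw [← h0, h1, one_mul]

lemma sum_ind [Fintype F] [DecidableEq F] [Fintype (PL F)] (k : ℕ) (f : PL F → ℤ) :
    ∑ p, ind (starterB F k) p * f p =
      ∑ x ∈ Finset.univ.filter (fun x : F => x ^ k = 1), f (embedPt F x) := by
  classical
  rw [← Finset.sum_image (s := Finset.univ.filter (fun x : F => x ^ k = 1)) (g := embedPt F)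
    (f := f) embedPt_inj.injOn]
  unfold ind
  simp only [ite_mul, one_mul, zero_mul]
  rw [← Finset.sum_filter]
  refine Finset.sum_congr ?_ fun _ _ => rfl
  ext p
  simp [starterB]

lemma T0_roots [Fintype F] [DecidableEq F] [Fintype (PL F)] (k : ℕ) :
    T0 (starterB F k) =
      ∑ a ∈ Finset.univ.filter (fun x : F => x ^ k = 1),
      ∑ b ∈ Finset.univ.filter (fun x : F => x ^ k = 1),
      ∑ c ∈ Finset.univ.filter (fun x : F => x ^ k = 1),
        quadraticChar F ((a - b) * (b - c) * (c - a)) := by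
  unfold T0
  simp only [← Finset.mul_sum]
  rw [sum_ind]
  refine Finset.sum_congr rfl fun a _ => ?_
  rw [sum_ind]
  refine Finset.sum_congr rfl fun b _ => ?_
  rw [sum_ind]
  refine Finset.sum_congr rfl fun c _ => ?_
  unfold embedPt
  rw [sg_mk]
  simp [d2]

lemma sum_shift [Fintype F] [DecidableEq F] (k : ℕ) (hk : k ≠ 0) (p : F) (hp : p ^ k = 1)
    (f : F → ℤ) :
    ∑ x ∈ Finset.univ.filter (fun x : F => x ^ k = 1), f x =
    ∑ x ∈ Finset.univ.filter (fun x : F => x ^ k = 1), f (p * x) := by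
  have hp0 : p ≠ 0 := by rintro rfl; simp [hk] at hp
  symm
  refine Finset.sum_equiv (Equiv.mulLeft₀ p hp0) ?_ ?_
  · intro x; simp [mul_pow, hp]
  · intro x _; simp

lemma sum_pow [Fintype F] [DecidableEq F] (k : ℕ) (hk : k ≠ 0) (γ : F) (hγ : IsPrimitiveRoot γ k)
    (f : F → ℤ) :
    ∑ x ∈ Finset.univ.filter (fun x : F => x ^ k = 1), f x =
    ∑ n ∈ Finset.range k, f (γ ^ n) := by
  have : NeZero k := ⟨hk⟩
  rw [← Finset.sum_image (s := Finset.range k) (g := fun n => γ ^ n) (f := f)]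
  · refine Finset.sum_congr ?_ fun _ _ => rfl
    ext x
    simp only [Finset.mem_filter, Finset.mem_univ, true_and, Finset.mem_image, Finset.mem_range]
    constructor
    · intro h; exact hγ.eq_pow_of_pow_eq_one h
    · rintro ⟨n, _, rfl⟩
      rw [← pow_mul, mul_comm, pow_mul, hγ.pow_eq_one, one_pow]
  · intro a ha b hb h
    simp only [Finset.coe_range, Set.mem_Iio] at ha hb
    exact hγ.pow_inj ha hb h

lemma T0_pow [Fintype F] [DecidableEq F] [Fintype (PL F)] (k : ℕ) (hk : k ≠ 0) (γ : F)
    (hγ : IsPrimitiveRoot γ k) (hsq : ∀ x : F, x ^ k = 1 → quadraticChar F x = 1)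
    (hneg : quadraticChar F (-1) = 1) :
    T0 (starterB F k) = k * ∑ a ∈ Finset.range k, ∑ b ∈ Finset.range k,
      quadraticChar F (1 - γ ^ a) * quadraticChar F (1 - γ ^ b) *
        quadraticChar F (1 - γ ^ (a + b)) := by
  have hpk : ∀ n, (γ ^ n) ^ k = 1 := fun n => by
    rw [← pow_mul, mul_comm, pow_mul, hγ.pow_eq_one, one_pow]
  rw [T0_roots, sum_pow k hk γ hγ]
  rw [Finset.sum_congr rfl (g := fun _ => ∑ a ∈ Finset.range k, ∑ b ∈ Finset.range k,
      quadraticChar F (1 - γ ^ a) * quadraticChar F (1 - γ ^ b) *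
        quadraticChar F (1 - γ ^ (a + b)))]
  · simp
  intro i _
  rw [sum_shift k hk (γ ^ i) (hpk i), sum_pow k hk γ hγ]
  refine Finset.sum_congr rfl fun a _ => ?_
  rw [sum_shift k hk (γ ^ i * γ ^ a) (by rw [mul_pow, hpk, hpk, one_mul]), sum_pow k hk γ hγ]
  refine Finset.sum_congr rfl fun b _ => ?_
  have : (γ ^ i - γ ^ i * γ ^ a) * (γ ^ i * γ ^ a - γ ^ i * γ ^ a * γ ^ b) *
      (γ ^ i * γ ^ a * γ ^ b - γ ^ i) =
      (-1) * (γ ^ i * γ ^ i * γ ^ i * γ ^ a) *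
        ((1 - γ ^ a) * (1 - γ ^ b) * (1 - γ ^ (a + b))) := by
    rw [pow_add]; ring
  rw [this]
  simp only [map_mul, hneg, hsq _ (hpk i), hsq _ (hpk a), one_mul]

lemma exists_sb [Fintype F] [DecidableEq F] (x : F) (hx : x ≠ 0) :
    ∃ b : Bool, quadraticChar F x = sb b := by
  rcases quadraticChar_dichotomy hx with h | h
  · exact ⟨true, h⟩
  · exact ⟨false, h⟩

lemma sb_good (b1 b2 b3 b4 b5 b6 : Bool) :
    (∃ ε : ℤ, (ε = 1 ∨ ε = -1) ∧
    ((sb b1, sb b2, sb b3, sb b4, sb b5, sb b6) = (ε, ε, -ε, ε, -ε, -ε) ∨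
      (sb b1, sb b2, sb b3, sb b4, sb b5, sb b6) = (ε, ε, -ε, -ε, -ε, ε) ∨
      (sb b1, sb b2, sb b3, sb b4, sb b5, sb b6) = (ε, -ε, ε, ε, -ε, -ε) ∨
      (sb b1, sb b2, sb b3, sb b4, sb b5, sb b6) = (ε, -ε, ε, -ε, -ε, ε))) ↔
    (b1 ≠ b5 ∧ b2 ≠ b3 ∧ b4 ≠ b6) := by
  have : ∀ P : ℤ → Prop, (∃ ε : ℤ, (ε = 1 ∨ ε = -1) ∧ P ε) ↔ (P 1 ∨ P (-1)) := by
    intro P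
    constructor
    · rintro ⟨ε, rfl | rfl, h⟩
      · exact Or.inl h
      · exact Or.inr h
    · rintro (h | h)
      · exact ⟨1, Or.inl rfl, h⟩
      · exact ⟨-1, Or.inr rfl, h⟩
  rw [this]
  simp only [Prod.mk.injEq]
  cases b1 <;> cases b2 <;> cases b3 <;> cases b4 <;> cases b5 <;> cases b6 <;> simp [sb]

end C

/-- Theorem 5.1, (ii) ↔ (iii): for `q ≡ 1 (mod 52)` and `β` a primitive 13th root
of unity, `(q,26)` gives a 3-design iff the sequence
`(χ(1-β), …, χ(1-β⁶))` is one of the eight listed sequences. -/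
theorem stmt_19 (F : Type) [Field F] [Fintype F] [DecidableEq F]
    (q : ℕ) (hq : Fintype.card F = q) (hq52 : q % 52 = 1)
    (β : F) (hβ : orderOf β = 13) :
    gives3Design F 26 ↔ goodChiSequence F β := by
  classical
  have : Fintype (PL F) := Fintype.ofFinite _
  have h2 : ringChar F ≠ 2 := by
    intro h
    have := FiniteField.even_card_of_char_two h
    omega
  have h20 : (2 : F) ≠ 0 := Ring.two_ne_zero h2
  have hβ13 : β ^ 13 = 1 := by rw [← hβ]; exact pow_orderOf_eq_one β
  have hβp : IsPrimitiveRoot β 13 := by rw [← hβ]; exact IsPrimitiveRoot.orderOf β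
  have hneg1 : IsSquare (-1 : F) := by
    rw [FiniteField.isSquare_neg_one_iff]; omega
  have hneg : quadraticChar F (-1) = 1 := by
    rwa [quadraticChar_one_iff_isSquare (neg_ne_zero.2 one_ne_zero)]
  have hβ0 : β ≠ 0 := by rintro rfl; simp at hβ13
  have hne : ∀ n, 0 < n → n < 13 → 1 - β ^ n ≠ 0 := by
    intro n h0 h1 h
    exact hβp.pow_ne_one_of_pos_of_lt h0.ne' h1 (sub_eq_zero.1 h).symm
  have hsq : ∀ x : F, x ^ 26 = 1 → quadraticChar F x = 1 := by
    intro x hx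
    have hx0 : x ≠ 0 := by rintro rfl; simp at hx
    rw [quadraticChar_one_iff_isSquare hx0]
    rw [FiniteField.isSquare_iff h2 hx0]
    obtain ⟨m, hm⟩ : ∃ m, Fintype.card F / 2 = 26 * m := ⟨q / 52, by omega⟩
    rw [hm, pow_mul, hx, one_pow]
  have hm1 : (-1 : F) ≠ 1 := by
    intro h; apply h20; linear_combination -h
  have hγ : IsPrimitiveRoot (-β) 26 := by
    have h1 : orderOf (-1 : F) = 2 := by
      rw [orderOf_neg_one, if_neg h2]
    have h3 : orderOf ((-1) * β) = 26 := by
      rw [(Commute.all (-1 : F) β).orderOf_mul_eq_mul_orderOf_of_coprime (by rw [h1, hβ]; norm_num),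
        h1, hβ]
    have := IsPrimitiveRoot.orderOf ((-1) * β)
    rw [h3] at this
    simpa using this
  have hβ1 : β ≠ 1 := by rintro rfl; simp at hβ
  have hβm : β ≠ -1 := by
    intro h
    rw [h] at hβ13
    apply hm1
    exact ((show Odd 13 by decide).neg_one_pow).symm.trans hβ13
  rw [design_iff h2 26 1 (-1) β (by simp) (by norm_num)
    (by rw [show 26 = 13 * 2 from rfl, pow_mul, hβ13, one_pow]) hm1.symm hβ1.symm hβm.symm,
    T0_pow 26 (by norm_num) (-β) hγ hsq hneg]
  set z : ℕ → ℤ := fun n => quadraticChar F (1 - (-β) ^ n) with hz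
  have hz0 : z 0 = 0 := by simp [hz]
  have hper : ∀ n, z (n + 26) = z n := by
    intro n; simp only [hz]; rw [pow_add, hγ.pow_eq_one, mul_one]
  have hev : ∀ n ≤ 26, z (26 - n) = z n := by
    intro n hn
    simp only [hz]
    have e : (-β) ^ (26 - n) * (-β) ^ n = 1 := by
      rw [← pow_add, Nat.sub_add_cancel hn, hγ.pow_eq_one]
    have : 1 - (-β) ^ n = (-1) * (-β) ^ n * (1 - (-β) ^ (26 - n)) := by
      linear_combination -e
    rw [this, map_mul, map_mul, hneg, hsq ((-β) ^ n), one_mul, one_mul]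
    rw [← pow_mul, mul_comm, pow_mul, hγ.pow_eq_one, one_pow]
  have hsum := sum_Rp z hz0 hper hev
  have hX : ∀ n ≤ 13, quadraticChar F (1 - β ^ (13 - n)) = quadraticChar F (1 - β ^ n) := by
    intro n hn
    have e : β ^ (13 - n) * β ^ n = 1 := by
      rw [← pow_add, Nat.sub_add_cancel hn, hβ13]
    have : 1 - β ^ n = (-1) * β ^ n * (1 - β ^ (13 - n)) := by
      linear_combination -e
    rw [this, map_mul, map_mul, hneg, hsq (β ^ n), one_mul, one_mul]
    rw [← pow_mul, mul_comm, pow_mul, show 26 = 13 * 2 from rfl, pow_mul, hβ13, one_pow, one_pow]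
  have hP : ∀ n, quadraticChar F (1 - β ^ (n + 13)) = quadraticChar F (1 - β ^ n) := by
    intro n; rw [pow_add, hβ13, mul_one]
  have hodd : ∀ n, Odd n → 0 < n → n < 13 →
      z n = quadraticChar F (1 - β ^ (2 * n)) * quadraticChar F (1 - β ^ n) := by
    intro n ho h0 h1
    have e : 1 - β ^ (2 * n) = (1 - (-β) ^ n) * (1 - β ^ n) := by
      rw [ho.neg_pow]; ring
    rw [e, map_mul, mul_assoc, ← sq, quadraticChar_sq_one (hne n h0 h1), mul_one]
  have hevn : ∀ n, Even n → z n = quadraticChar F (1 - β ^ n) := by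
    intro n he
    simp only [hz]
    rw [he.neg_pow]
  obtain ⟨b1, e1⟩ := exists_sb _ (hne 1 (by norm_num) (by norm_num))
  obtain ⟨b2, e2⟩ := exists_sb _ (hne 2 (by norm_num) (by norm_num))
  obtain ⟨b3, e3⟩ := exists_sb _ (hne 3 (by norm_num) (by norm_num))
  obtain ⟨b4, e4⟩ := exists_sb _ (hne 4 (by norm_num) (by norm_num))
  obtain ⟨b5, e5⟩ := exists_sb _ (hne 5 (by norm_num) (by norm_num))
  obtain ⟨b6, e6⟩ := exists_sb _ (hne 6 (by norm_num) (by norm_num))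
  obtain ⟨d, ed⟩ := exists_sb (2 : F) h20
  have e7 := (hX 6 (by norm_num)).trans e6
  have e8 := (hX 5 (by norm_num)).trans e5
  have e9 := (hX 4 (by norm_num)).trans e4
  have e10 := (hX 3 (by norm_num)).trans e3
  have e11 := (hX 2 (by norm_num)).trans e2
  have e12 := (hX 1 (by norm_num)).trans e1
  have e14 := (hP 1).trans e1
  have e18 := (hP 5).trans e5
  have e22 := (hP 9).trans e9
  norm_num only at e7 e8 e9 e10 e11 e12 e14 e18 e22
  have z1 : z 1 = sb b2 * sb b1 := by rw [hodd 1 (by decide) (by norm_num) (by norm_num), e1, e2]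
  have z2 : z 2 = sb b2 := by rw [hevn 2 (by decide), e2]
  have z3 : z 3 = sb b6 * sb b3 := by rw [hodd 3 (by decide) (by norm_num) (by norm_num), e3, e6]
  have z4 : z 4 = sb b4 := by rw [hevn 4 (by decide), e4]
  have z5 : z 5 = sb b3 * sb b5 := by rw [hodd 5 (by decide) (by norm_num) (by norm_num), e5, e10]
  have z6 : z 6 = sb b6 := by rw [hevn 6 (by decide), e6]
  have z7 : z 7 = sb b1 * sb b6 := by rw [hodd 7 (by decide) (by norm_num) (by norm_num), e7, e14]
  have z8 : z 8 = sb b5 := by rw [hevn 8 (by decide), e8]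
  have z9 : z 9 = sb b5 * sb b4 := by rw [hodd 9 (by decide) (by norm_num) (by norm_num), e9, e18]
  have z10 : z 10 = sb b3 := by rw [hevn 10 (by decide), e10]
  have z11 : z 11 = sb b4 * sb b2 := by
    rw [hodd 11 (by decide) (by norm_num) (by norm_num), e11, e22]
  have z12 : z 12 = sb b1 := by rw [hevn 12 (by decide), e12]
  have z13 : z 13 = sb d := by
    simp only [hz]
    rw [(show Odd 13 by decide).neg_pow, hβ13, ← ed]
    congr 1; norm_num
  rw [z1, z2, z3, z4, z5, z6, z7, z8, z9, z10, z11, z12, z13] at hsum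
  have hdec := Rp_dec b1 b2 b3 b4 b5 b6 d
  simp only at hdec
  have hgood : goodChiSequence F β ↔ (b1 ≠ b5 ∧ b2 ≠ b3 ∧ b4 ≠ b6) := by
    rw [← sb_good]
    unfold goodChiSequence
    rw [pow_one] at e1
    rw [e1, e2, e3, e4, e5, e6]
  rw [hgood, ← hdec]
  change ((26 : ℕ) : ℤ) * (∑ a ∈ Finset.range 26, ∑ b ∈ Finset.range 26,
    z a * z b * z (a + b)) = 0 ↔ _
  rw [hsum]
  constructor
  · intro h; push_cast at h; linarith
  · intro h; rw [h]; simp
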